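/- For every nonnegative integer n, ped(225n + 133) ≡ 0 (mod 24). -/

import Mathlib

/-- `ped n` is the number of partitions of `n` in which the even parts are
distinct (and the odd parts are unrestricted). -/
def ped (n : ℕ) : ℕ :=
  Fintype.card {p : n.Partition // ∀ x ∈ p.parts, Even x → p.parts.count x ≤ 1}

open PowerSeries

/-- The power series `∑ i, X ^ w i` counting the elements of `ι` by weight. -/
noncomputable def countSeries (R : Type*) [CommRing R] {ι : Type*} (w : ι → ℕ) : R⟦X⟧ :=
  PowerSeries.mk fun n => (Nat.card {i // w i = n} : R)

/-- Every weight is attained only finitely often. -/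
def FiniteFibers {ι : Type*} (w : ι → ℕ) : Prop := ∀ n, Finite {i // w i = n}

section countSeries
variable {R : Type*} [CommRing R] {ι κ μ : Type*}

theorem coeff_countSeries (w : ι → ℕ) (n : ℕ) :
    coeff n (countSeries R w) = (Nat.card {i // w i = n} : R) := coeff_mk _ _

theorem coeff_countSeries_eq_zero {w : ι → ℕ} {n : ℕ} (h : ∀ i, w i ≠ n) :
    coeff n (countSeries R w) = 0 := by
  have : IsEmpty {i // w i = n} := ⟨fun i => h i.1 i.2⟩
  simp [coeff_countSeries]

theorem map_countSeries {S : Type*} [CommRing S] (f : R →+* S) (w : ι → ℕ) :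
    PowerSeries.map f (countSeries R w) = countSeries S w := by
  ext n
  simp [coeff_countSeries]

theorem finiteFibers_of_le_nat {w : ℕ → ℕ} (h : ∀ k, k ≤ w k) : FiniteFibers w := fun n =>
  ((Set.finite_Iic n).subset fun k (hk : w k = n) => hk ▸ h k).to_subtype

theorem finiteFibers_of_natAbs_le {w : ℤ → ℕ} (h : ∀ x, x.natAbs ≤ w x + 1) :
    FiniteFibers w := fun n =>
  ((Set.finite_Icc (-(n + 1 : ℤ)) (n + 1)).subset fun x (hx : w x = n) => by
    have := h x
    simp only [Set.mem_Icc]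
    omega).to_subtype

theorem FiniteFibers.comp {w : ι → ℕ} (hw : FiniteFibers w) {a : κ → ι}
    (ha : Function.Injective a) : FiniteFibers fun i => w (a i) := fun n => by
  have := hw n
  exact Finite.of_injective (fun i : {i // w (a i) = n} => (⟨a i.1, i.2⟩ : {i // w i = n}))
    fun i j h => Subtype.ext (ha (by simpa using h))

theorem FiniteFibers.mul_add {w : ι → ℕ} (hw : FiniteFibers w) {m : ℕ} (hm : m ≠ 0) (k : ℕ) :
    FiniteFibers fun i => m * w i + k := fun n => by
  have := hw ((n - k) / m)
  exact Finite.of_injective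
    (fun i : {i // m * w i + k = n} => (⟨i.1, by
      obtain ⟨i, rfl⟩ := i
      rw [Nat.add_sub_cancel, Nat.mul_div_cancel_left _ (Nat.pos_of_ne_zero hm)]⟩ :
        {i // w i = (n - k) / m}))
    fun i j h => Subtype.ext (by simpa using h)

/-- Pairs of a given total weight, sorted by the weights of their entries. -/
def fiberAddEquiv (v : ι → ℕ) (w : κ → ℕ) (n : ℕ) :
    {p : ι × κ // v p.1 + w p.2 = n} ≃
      Σ a : Finset.HasAntidiagonal.antidiagonal n, {i // v i = a.1.1} × {j // w j = a.1.2} where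
  toFun p := ⟨⟨(v p.1.1, w p.1.2), by simpa using p.2⟩, ⟨p.1.1, rfl⟩, ⟨p.1.2, rfl⟩⟩
  invFun s := ⟨(s.2.1.1, s.2.2.1), by
    rw [s.2.1.2, s.2.2.2]; exact Finset.HasAntidiagonal.mem_antidiagonal.1 s.1.2⟩
  left_inv p := rfl
  right_inv := by
    rintro ⟨⟨⟨a, b⟩, h⟩, ⟨i, hi⟩, ⟨j, hj⟩⟩
    change v i = a at hi
    change w j = b at hj
    subst hi hj
    rfl

theorem FiniteFibers.prod {v : ι → ℕ} {w : κ → ℕ} (hv : FiniteFibers v) (hw : FiniteFibers w) :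
    FiniteFibers fun p : ι × κ => v p.1 + w p.2 := fun n => by
  have := fun a => hv a
  have := fun a => hw a
  exact Finite.of_equiv _ (fiberAddEquiv v w n).symm

theorem countSeries_mul {v : ι → ℕ} {w : κ → ℕ} (hv : FiniteFibers v) (hw : FiniteFibers w) :
    countSeries R v * countSeries R w = countSeries R fun p : ι × κ => v p.1 + w p.2 := by
  ext n
  have := fun a => hv a
  have := fun a => hw a
  rw [coeff_countSeries, Nat.card_congr (fiberAddEquiv v w n), Nat.card_sigma, coeff_mul]
  simp only [Nat.card_prod, coeff_countSeries]
  rw [Finset.sum_coe_sort (Finset.HasAntidiagonal.antidiagonal n)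
    fun a => Nat.card {i // v i = a.1} * Nat.card {j // w j = a.2}]
  push_cast
  rfl

theorem expand_countSeries (w : ι → ℕ) {m : ℕ} (hm : m ≠ 0) :
    expand m hm (countSeries R w) = countSeries R fun i => m * w i := by
  ext n
  rw [coeff_expand]
  split_ifs with h
  · obtain ⟨k, rfl⟩ := h
    simp [coeff_countSeries, hm]
  · rw [coeff_countSeries_eq_zero]
    rintro i rfl
    exact h (dvd_mul_right _ _)

theorem X_pow_mul_countSeries (w : ι → ℕ) (k : ℕ) :
    X ^ k * countSeries R w = countSeries R fun i => w i + k := by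
  ext n
  rw [coeff_X_pow_mul']
  split_ifs with h
  · obtain ⟨m, rfl⟩ := Nat.exists_eq_add_of_le' h
    simp [coeff_countSeries]
  · rw [coeff_countSeries_eq_zero]
    intro i
    omega

theorem countSeries_sumElim {v : ι → ℕ} {w : κ → ℕ} (hv : FiniteFibers v) (hw : FiniteFibers w) :
    countSeries R (Sum.elim v w) = countSeries R v + countSeries R w := by
  ext n
  have : Finite {i // Sum.elim v w (Sum.inl i) = n} := hv n
  have : Finite {j // Sum.elim v w (Sum.inr j) = n} := hw n
  rw [map_add, coeff_countSeries, coeff_countSeries, coeff_countSeries,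
    Nat.card_congr (Equiv.subtypeSum), Nat.card_sum]
  simp

theorem countSeries_comp_equiv (w : ι → ℕ) (e : κ ≃ ι) :
    countSeries R (fun i => w (e i)) = countSeries R w := by
  ext n
  rw [coeff_countSeries, coeff_countSeries,
    Nat.card_congr (e.subtypeEquiv (q := fun i => w i = n) fun _ => Iff.rfl)]

/-- Splitting the index type into two pieces. -/
theorem countSeries_eq_add {w : ι → ℕ} {a : κ → ι} {b : μ → ι} {u : κ → ℕ} {v : μ → ℕ}
    (hab : Function.Bijective (Sum.elim a b)) (hu : FiniteFibers u) (hv : FiniteFibers v)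
    (ha : ∀ i, w (a i) = u i) (hb : ∀ i, w (b i) = v i) :
    countSeries R w = countSeries R u + countSeries R v := by
  rw [← countSeries_sumElim hu hv, ← countSeries_comp_equiv w (Equiv.ofBijective _ hab)]
  congr 1
  funext i
  cases i <;> simp [ha, hb]

theorem X_mul_derivative_countSeries {w : ι → ℕ} {k : ℕ} {p : ℕ} [CharP R p]
    (h : ∀ i, w i ≡ k [MOD p]) :
    X * d⁄dX R (countSeries R w) = (k : R⟦X⟧) * countSeries R w := by
  ext n
  rw [← nsmul_eq_mul, map_nsmul, nsmul_eq_mul]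
  have key : (n : R) * coeff n (countSeries R w) = (k : R) * coeff n (countSeries R w) := by
    by_cases hn : ∃ i, w i = n
    · obtain ⟨i, rfl⟩ := hn
      rw [(CharP.natCast_eq_natCast R p).2 (h i)]
    · push Not at hn
      rw [coeff_countSeries_eq_zero hn, mul_zero, mul_zero]
  rw [← key]
  cases n with
  | zero => simp
  | succ n => rw [coeff_succ_X_mul, coeff_derivative, mul_comm]; push_cast; rfl

theorem countSeries_pow_three (w : ι → ℕ) :
    countSeries (ZMod 3) w ^ 3 = countSeries (ZMod 3) fun i => 3 * w i := by
  have h := MvPowerSeries.map_frobenius_expand (R := ZMod 3) 3 (by norm_num)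
    (f := countSeries (ZMod 3) w)
  rw [ZMod.frobenius_zmod] at h
  rw [← expand_countSeries w three_ne_zero]
  exact h.symm.trans (by ext; rfl)

theorem three_eq_zero_powerSeries : (3 : (ZMod 3)⟦X⟧) = 0 := by
  rw [← map_ofNat (C (R := ZMod 3)) 3, show (OfNat.ofNat 3 : ZMod 3) = 0 by decide, map_zero]

theorem X_mul_derivative_pow_three (f : (ZMod 3)⟦X⟧) : X * d⁄dX (ZMod 3) (f ^ 3) = 0 := by
  rw [Derivation.leibniz_pow, nsmul_eq_mul]
  simp [three_eq_zero_powerSeries]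

end countSeries

/-- Triangular numbers with integer index. -/
def intTri (x : ℤ) : ℕ := (x * (x + 1) / 2).toNat

theorem two_mul_intTri (x : ℤ) : 2 * (intTri x : ℤ) = x * (x + 1) := by
  have h : 0 ≤ x * (x + 1) := by
    rcases le_or_gt 0 x with hx | hx
    · positivity
    · nlinarith
  rw [intTri, Int.toNat_of_nonneg (by omega)]
  exact Int.two_mul_ediv_two_of_even (Int.even_mul_succ_self x)

theorem finiteFibers_sq : FiniteFibers fun x : ℤ => x.natAbs ^ 2 :=
  finiteFibers_of_natAbs_le fun x => by nlinarith [sq_nonneg ((x.natAbs : ℤ) - 1)]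

theorem finiteFibers_intTri : FiniteFibers intTri :=
  finiteFibers_of_natAbs_le fun x => by
    have h := two_mul_intTri x
    zify
    rcases abs_cases x with ⟨hx, _⟩ | ⟨hx, _⟩ <;> rw [hx] <;> nlinarith

theorem two_mul_nat_tri (k : ℕ) : 2 * (k * (k + 1) / 2) = k * (k + 1) :=
  Nat.two_mul_div_two_of_even (Nat.even_mul_succ_self k)

theorem le_tri (k : ℕ) : k ≤ k * (k + 1) / 2 := by
  have h := two_mul_nat_tri k
  rcases k with _ | k
  · simp
  · nlinarith

theorem finiteFibers_tri : FiniteFibers fun k : ℕ => k * (k + 1) / 2 :=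
  finiteFibers_of_le_nat le_tri

theorem finiteFibers_succ_sq : FiniteFibers fun k : ℕ => (k + 1) ^ 2 :=
  finiteFibers_of_le_nat fun k => by nlinarith

section theta
variable (R : Type*) [CommRing R]

/-- Ramanujan's theta function `φ(q) = ∑_{x ∈ ℤ} q ^ x ^ 2`. -/
noncomputable def thetaPhi : R⟦X⟧ := countSeries R fun x : ℤ => x.natAbs ^ 2

/-- Ramanujan's theta function `ψ(q) = ∑_{k ≥ 0} q ^ (k * (k + 1) / 2)`. -/
noncomputable def thetaPsi : R⟦X⟧ := countSeries R fun k : ℕ => k * (k + 1) / 2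

/-- The series `∑_{k ≥ 1} q ^ k ^ 2`. -/
noncomputable def posSquareSeries : R⟦X⟧ := countSeries R fun k : ℕ => (k + 1) ^ 2

theorem countSeries_intTri : countSeries R intTri = 2 * thetaPsi R := by
  rw [two_mul]
  refine countSeries_eq_add (a := fun k : ℕ => (k : ℤ)) (b := fun k : ℕ => -1 - (k : ℤ))
    ⟨?_, ?_⟩ finiteFibers_tri finiteFibers_tri ?_ ?_
  · rintro (i | i) (j | j) h <;> simp at h ⊢ <;> omega
  · intro x
    rcases le_or_gt 0 x with hx | hx
    · exact ⟨.inl x.toNat, by simp [hx]⟩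
    · exact ⟨.inr (-1 - x).toNat, by simp; omega⟩
  · intro k
    have h := two_mul_nat_tri k
    have h' := two_mul_intTri k
    zify at h
    have : (2 : ℤ) * (intTri k : ℤ) = 2 * ((k * (k + 1) / 2 : ℕ) : ℤ) := by
      push_cast; linarith
    exact_mod_cast mul_left_cancel₀ two_ne_zero this
  · intro k
    have h := two_mul_nat_tri k
    have h' := two_mul_intTri (-1 - k)
    zify at h
    have : (2 : ℤ) * (intTri (-1 - k) : ℤ) = 2 * ((k * (k + 1) / 2 : ℕ) : ℤ) := by
      push_cast; linarith
    exact_mod_cast mul_left_cancel₀ two_ne_zero this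

theorem countSeries_unit : (countSeries R fun _ : Unit => 0) = 1 := by
  ext n
  rw [coeff_one]
  split_ifs with h
  · subst h
    simp [coeff_countSeries]
  · exact coeff_countSeries_eq_zero fun _ h' => h h'.symm

theorem thetaPhi_eq : thetaPhi R = 1 + 2 * posSquareSeries R := by
  have hU : FiniteFibers fun _ : Unit => 0 := fun n => inferInstance
  rw [two_mul, posSquareSeries, ← countSeries_sumElim finiteFibers_succ_sq finiteFibers_succ_sq,
    ← countSeries_unit]
  refine countSeries_eq_add (a := fun _ => 0)
    (b := Sum.elim (fun k : ℕ => (k + 1 : ℤ)) fun k : ℕ => -(k + 1 : ℤ))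
    ⟨?_, ?_⟩ hU ?_ ?_ ?_
  · rintro (i | i | i) (j | j | j) h <;> simp at h ⊢ <;> omega
  · intro x
    rcases lt_trichotomy x 0 with hx | hx | hx
    · exact ⟨.inr (.inr (-x - 1).toNat), by simp; omega⟩
    · exact ⟨.inl (), by simp [hx]⟩
    · exact ⟨.inr (.inl (x - 1).toNat), by simp; omega⟩
  · intro n
    have := finiteFibers_succ_sq n
    have h1 : Finite {i // Sum.elim (fun k : ℕ => (k + 1) ^ 2) (fun k : ℕ => (k + 1) ^ 2)
      (Sum.inl i) = n} := this
    have h2 : Finite {i // Sum.elim (fun k : ℕ => (k + 1) ^ 2) (fun k : ℕ => (k + 1) ^ 2)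
      (Sum.inr i) = n} := this
    exact Finite.of_equiv _ Equiv.subtypeSum.symm
  · intro i; simp
  · rintro (k | k)
    · simp only [Sum.elim_inl]; congr 1
    · simp only [Sum.elim_inr, Int.natAbs_neg]; congr 1

/-- `Ψ(q)^2 = 2 φ(q) Ψ(q^2)`, where `Ψ = 2 ψ`. -/
theorem countSeries_intTri_sq :
    countSeries R intTri ^ 2 =
      2 * (thetaPhi R * countSeries R fun x => 2 * intTri x) := by
  have hT : FiniteFibers fun x => 2 * intTri x := finiteFibers_intTri.mul_add two_ne_zero 0
  rw [sq, countSeries_mul finiteFibers_intTri finiteFibers_intTri, thetaPhi,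
    countSeries_mul finiteFibers_sq hT, two_mul]
  refine countSeries_eq_add (a := fun p : ℤ × ℤ => (p.2 + p.1, p.2 - p.1))
    (b := fun p : ℤ × ℤ => (p.1 + p.2, p.1 - p.2 - 1))
    ⟨?_, ?_⟩ (finiteFibers_sq.prod hT) (finiteFibers_sq.prod hT) ?_ ?_
  · rintro (⟨i, i'⟩ | ⟨i, i'⟩) (⟨j, j'⟩ | ⟨j, j'⟩) h <;> simp at h ⊢ <;> omega
  · rintro ⟨x, y⟩
    rcases Int.even_or_odd' (x - y) with ⟨c, hc | hc⟩
    · exact ⟨.inl (c, x - c), by simp; omega⟩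
    · exact ⟨.inr (c + 1 + y, x - (c + 1 + y)), by simp; omega⟩
  · rintro ⟨x, y⟩
    have h1 := two_mul_intTri (y + x)
    have h2 := two_mul_intTri (y - x)
    have h3 := two_mul_intTri y
    zify
    rw [sq_abs]
    linarith
  · rintro ⟨x, y⟩
    have h1 := two_mul_intTri (x + y)
    have h2 := two_mul_intTri (x - y - 1)
    have h3 := two_mul_intTri y
    zify
    rw [sq_abs]
    linarith

/-- `φ(q)^2 = φ(q^2)^2 + q Ψ(q^4)^2`, where `Ψ = 2 ψ`. -/
theorem thetaPhi_sq :
    thetaPhi R ^ 2 = (countSeries R fun x : ℤ => 2 * x.natAbs ^ 2) ^ 2 +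
      X * (countSeries R fun x => 4 * intTri x) ^ 2 := by
  have hS : FiniteFibers fun x : ℤ => 2 * x.natAbs ^ 2 := finiteFibers_sq.mul_add two_ne_zero 0
  have hT : FiniteFibers fun x => 4 * intTri x := finiteFibers_intTri.mul_add four_ne_zero 0
  have hT' : FiniteFibers fun p : ℤ × ℤ => 4 * intTri p.1 + 4 * intTri p.2 + 1 := by
    simpa using (hT.prod hT).mul_add one_ne_zero 1
  rw [sq, sq, sq, thetaPhi, countSeries_mul finiteFibers_sq finiteFibers_sq,
    countSeries_mul hS hS, countSeries_mul hT hT, ← pow_one X, X_pow_mul_countSeries]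
  refine countSeries_eq_add (a := fun p : ℤ × ℤ => (p.1 + p.2, p.1 - p.2))
    (b := fun p : ℤ × ℤ => (p.1 + p.2 + 1, p.1 - p.2)) ⟨?_, ?_⟩ (hS.prod hS) hT' ?_ ?_
  · rintro (⟨i, i'⟩ | ⟨i, i'⟩) (⟨j, j'⟩ | ⟨j, j'⟩) h <;> simp at h ⊢ <;> omega
  · rintro ⟨x, y⟩
    rcases Int.even_or_odd' (x - y) with ⟨c, hc | hc⟩
    · exact ⟨.inl (x - c, c), by simp; omega⟩
    · exact ⟨.inr (c + y, c), by simp; omega⟩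
  · rintro ⟨x, y⟩
    zify
    simp only [sq_abs]
    ring
  · rintro ⟨x, y⟩
    have h1 := two_mul_intTri x
    have h2 := two_mul_intTri y
    zify
    simp only [sq_abs]
    linarith

/-- `φ(q) φ(q^3) + q Ψ(q^2) Ψ(q^6)` counts Eisenstein integers by norm, where `Ψ = 2 ψ`. -/
theorem countSeries_eisenstein :
    (countSeries R fun p : ℤ × ℤ => (p.1 ^ 2 + p.1 * p.2 + p.2 ^ 2).toNat) =
      thetaPhi R * (countSeries R fun x : ℤ => 3 * x.natAbs ^ 2) +
      X * ((countSeries R fun x => 2 * intTri x) * countSeries R fun x => 6 * intTri x) := by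
  have hS : FiniteFibers fun x : ℤ => 3 * x.natAbs ^ 2 := finiteFibers_sq.mul_add three_ne_zero 0
  have hT : FiniteFibers fun x => 2 * intTri x := finiteFibers_intTri.mul_add two_ne_zero 0
  have hT6 : FiniteFibers fun x => 6 * intTri x :=
    finiteFibers_intTri.mul_add (by norm_num : (6 : ℕ) ≠ 0) 0
  have hT' : FiniteFibers fun p : ℤ × ℤ => 2 * intTri p.1 + 6 * intTri p.2 + 1 := by
    simpa using (hT.prod hT6).mul_add one_ne_zero 1
  have hnn : ∀ x y : ℤ, 0 ≤ x ^ 2 + x * y + y ^ 2 := fun x y => by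
    nlinarith [sq_nonneg (x + y), sq_nonneg x, sq_nonneg y]
  rw [thetaPhi, countSeries_mul finiteFibers_sq hS, countSeries_mul hT hT6, ← pow_one X,
    X_pow_mul_countSeries]
  refine countSeries_eq_add (a := fun p : ℤ × ℤ => (p.1 - p.2, 2 * p.2))
    (b := fun p : ℤ × ℤ => (p.1 - p.2, 2 * p.2 + 1)) ⟨?_, ?_⟩ (finiteFibers_sq.prod hS) hT' ?_ ?_
  · rintro (⟨i, i'⟩ | ⟨i, i'⟩) (⟨j, j'⟩ | ⟨j, j'⟩) h <;> simp at h ⊢ <;> omega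
  · rintro ⟨x, y⟩
    rcases Int.even_or_odd' y with ⟨c, hc | hc⟩
    · exact ⟨.inl (x + c, c), by simp; omega⟩
    · exact ⟨.inr (x + c, c), by simp; omega⟩
  · rintro ⟨x, y⟩
    zify
    rw [Int.toNat_of_nonneg (hnn _ _)]
    simp only [sq_abs]
    ring
  · rintro ⟨x, y⟩
    have h1 := two_mul_intTri x
    have h2 := two_mul_intTri y
    zify
    rw [Int.toNat_of_nonneg (hnn _ _)]
    linarith

end theta

section modThree

theorem countSeries_eisenstein_eq_one :
    (countSeries (ZMod 3) fun p : ℤ × ℤ => (p.1 ^ 2 + p.1 * p.2 + p.2 ^ 2).toNat) = 1 := by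
  have hnn : ∀ x y : ℤ, 0 ≤ x ^ 2 + x * y + y ^ 2 := fun x y => by
    nlinarith [sq_nonneg (x + y), sq_nonneg x, sq_nonneg y]
  have hz : ∀ x y : ℤ, x ^ 2 + x * y + y ^ 2 = 0 → x = 0 ∧ y = 0 := fun x y h => by
    constructor <;> apply pow_eq_zero_iff two_ne_zero |>.1 <;>
      nlinarith [sq_nonneg (x + y), sq_nonneg x, sq_nonneg y]
  ext n
  rw [coeff_one, coeff_countSeries]
  split_ifs with hn
  · subst hn
    have : Unique {p : ℤ × ℤ // (p.1 ^ 2 + p.1 * p.2 + p.2 ^ 2).toNat = 0} :=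
      { default := ⟨(0, 0), by simp⟩
        uniq := by
          rintro ⟨⟨x, y⟩, h⟩
          have h0 := hz x y (le_antisymm (Int.toNat_eq_zero.1 h) (hnn x y))
          simp [h0.1, h0.2] }
    rw [Nat.card_unique, Nat.cast_one]
  · have hfin : Finite {p : ℤ × ℤ // (p.1 ^ 2 + p.1 * p.2 + p.2 ^ 2).toNat = n} := by
      refine ((Set.finite_Icc ((-(2 * n) : ℤ), (-(2 * n) : ℤ)) ((2 * n : ℤ), (2 * n : ℤ))).subset
        ?_).to_subtype
      rintro ⟨x, y⟩ h
      have h' : x ^ 2 + x * y + y ^ 2 = n := by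
        rw [← Int.toNat_of_nonneg (hnn x y)]
        exact_mod_cast h
      have h1 : (1 : ℤ) ≤ n := by omega
      simp only [Set.mem_Icc, Prod.mk_le_mk]
      refine ⟨⟨?_, ?_⟩, ?_, ?_⟩ <;> nlinarith [sq_nonneg (x + 2 * y), sq_nonneg (2 * x + y)]
    have := Fintype.ofFinite {p : ℤ × ℤ // (p.1 ^ 2 + p.1 * p.2 + p.2 ^ 2).toNat = n}
    let f : Function.End {p : ℤ × ℤ // (p.1 ^ 2 + p.1 * p.2 + p.2 ^ 2).toNat = n} :=
      fun p => ⟨(p.1.2, -p.1.1 - p.1.2), by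
        refine Eq.trans ?_ p.2
        dsimp only
        congr 1
        ring⟩
    have hf : f ^ 3 ^ 1 = 1 := by
      funext p
      obtain ⟨⟨x, y⟩, h⟩ := p
      apply Subtype.ext
      change (_, _) = (x, y)
      ext <;> dsimp only [f] <;> ring
    classical
    have key := Equiv.Perm.card_fixedPoints_modEq (p := 3) hf
    have h0 : IsEmpty f.fixedPoints := by
      refine ⟨?_⟩
      rintro ⟨⟨⟨x, y⟩, h⟩, hp⟩
      have hp' : (y, -x - y) = (x, y) := congrArg Subtype.val hp
      rw [Prod.mk.injEq] at hp'
      have : x = 0 ∧ y = 0 := by omega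
      obtain ⟨rfl, rfl⟩ := this
      exact hn (by simpa using h.symm)
    rw [Fintype.card_eq_zero (α := f.fixedPoints), ← Nat.card_eq_fintype_card] at key
    rw [(ZMod.natCast_eq_natCast_iff _ _ 3).2 key, Nat.cast_zero]

theorem X_mul_countSeries_intTri_pow :
    X * countSeries (ZMod 3) intTri ^ 8 = thetaPhi (ZMod 3) ^ 4 - thetaPhi (ZMod 3) ^ 8 := by
  have h3 := three_eq_zero_powerSeries
  have h1 := congrArg (expand 2 two_ne_zero) (countSeries_eisenstein_eq_one.symm.trans
    (countSeries_eisenstein (ZMod 3)))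
  have h2 := congrArg (expand 2 two_ne_zero) (countSeries_intTri_sq (ZMod 3))
  have h4 := countSeries_intTri_sq (ZMod 3)
  have h5 := thetaPhi_sq (ZMod 3)
  have hS := countSeries_pow_three fun x : ℤ => 2 * x.natAbs ^ 2
  have hT := countSeries_pow_three fun x : ℤ => 4 * intTri x
  simp only [map_add, map_mul, map_pow, map_one, expand_X, expand_countSeries, map_ofNat, thetaPhi,
    ← mul_assoc, Nat.reduceMul] at h1 h2 h4 h5 hS hT ⊢
  rw [← hS, ← hT] at h1
  generalize countSeries (ZMod 3) intTri = P at *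
  generalize (countSeries (ZMod 3) fun x : ℤ => x.natAbs ^ 2) = F at *
  generalize (countSeries (ZMod 3) fun x : ℤ => 2 * intTri x) = P2 at *
  generalize (countSeries (ZMod 3) fun x : ℤ => 2 * x.natAbs ^ 2) = F2 at *
  generalize (countSeries (ZMod 3) fun x : ℤ => 4 * intTri x) = P4 at *
  have e1 : P ^ 8 = 64 * F ^ 4 * (F2 ^ 2 * P4 ^ 2) := by
    calc P ^ 8 = (P ^ 2) ^ 4 := by ring
      _ = 16 * F ^ 4 * (P2 ^ 2) ^ 2 := by rw [h4]; ring
      _ = _ := by rw [h2]; ring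
  have e2 : F ^ 8 = F ^ 4 * (F2 ^ 2 + X * P4 ^ 2) ^ 2 := by rw [← h5]; ring
  rw [e1, e2]
  linear_combination (-F ^ 4) * h1 + 22 * X * F ^ 4 * F2 ^ 2 * P4 ^ 2 * h3

theorem X_mul_derivative_thetaPhi :
    X * d⁄dX (ZMod 3) (thetaPhi (ZMod 3)) = thetaPhi (ZMod 3) - thetaPhi (ZMod 3) ^ 9 := by
  have hS : FiniteFibers fun x : ℤ => 9 * x.natAbs ^ 2 :=
    finiteFibers_sq.mul_add (by norm_num : (9 : ℕ) ≠ 0) 0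
  have h9 : thetaPhi (ZMod 3) ^ 9 = countSeries (ZMod 3) fun x : ℤ => 9 * x.natAbs ^ 2 := by
    rw [show 9 = 3 * 3 from rfl, pow_mul, thetaPhi, countSeries_pow_three, countSeries_pow_three]
    simp only [← mul_assoc, Nat.reduceMul]
  have h : thetaPhi (ZMod 3) = thetaPhi (ZMod 3) ^ 9 +
      countSeries (ZMod 3) fun x : {x : ℤ // ¬ 3 ∣ x} => x.1.natAbs ^ 2 := by
    rw [h9]
    refine countSeries_eq_add (a := fun x : ℤ => 3 * x) (b := Subtype.val) ⟨?_, ?_⟩ hS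
      (finiteFibers_sq.comp Subtype.val_injective) ?_ fun _ => rfl
    · rintro (i | ⟨i, hi⟩) (j | ⟨j, hj⟩) h <;> simp at h ⊢ <;> omega
    · intro x
      by_cases hx : 3 ∣ x
      · exact ⟨.inl (x / 3), by simp; omega⟩
      · exact ⟨.inr ⟨x, hx⟩, rfl⟩
    · intro x
      zify
      simp only [sq_abs]
      ring
  have h1 : X * d⁄dX (ZMod 3)
      (countSeries (ZMod 3) fun x : {x : ℤ // ¬ 3 ∣ x} => x.1.natAbs ^ 2) =
      countSeries (ZMod 3) fun x : {x : ℤ // ¬ 3 ∣ x} => x.1.natAbs ^ 2 := by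
    rw [X_mul_derivative_countSeries (k := 1) (p := 3), Nat.cast_one, one_mul]
    rintro ⟨x, hx⟩
    have : x.natAbs % 3 = 1 ∨ x.natAbs % 3 = 2 := by omega
    rcases this with h | h <;> simp [Nat.ModEq, Nat.pow_mod, h]
  have h2 := X_mul_derivative_pow_three (thetaPhi (ZMod 3) ^ 3)
  rw [← pow_mul] at h2
  conv_lhs => rw [h]
  rw [map_add, mul_add, h2, h1]
  linear_combination -h

theorem X_mul_derivative_countSeries_intTri :
    X * d⁄dX (ZMod 3) (countSeries (ZMod 3) intTri) = X * countSeries (ZMod 3) intTri ^ 9 := by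
  have h9 : X * countSeries (ZMod 3) intTri ^ 9 =
      countSeries (ZMod 3) fun x : ℤ => 9 * intTri x + 1 := by
    rw [show 9 = 3 * 3 from rfl, pow_mul, countSeries_pow_three, countSeries_pow_three,
      ← pow_one X, X_pow_mul_countSeries]
    simp only [← mul_assoc, Nat.reduceMul]
  have htri : ∀ x, intTri (3 * x + 1) = 9 * intTri x + 1 := fun x => by
    have h1 := two_mul_intTri (3 * x + 1)
    have h2 := two_mul_intTri x
    zify
    linarith
  have h : countSeries (ZMod 3) intTri = X * countSeries (ZMod 3) intTri ^ 9 +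
      countSeries (ZMod 3) fun x : {x : ℤ // ¬ x % 3 = 1} => intTri x.1 := by
    rw [h9]
    refine countSeries_eq_add (a := fun x : ℤ => 3 * x + 1) (b := Subtype.val) ⟨?_, ?_⟩
      (finiteFibers_intTri.mul_add (by norm_num : (9 : ℕ) ≠ 0) 1)
      (finiteFibers_intTri.comp Subtype.val_injective) htri fun _ => rfl
    · rintro (i | ⟨i, hi⟩) (j | ⟨j, hj⟩) h <;> simp at h ⊢ <;> omega
    · intro x
      by_cases hx : x % 3 = 1
      · exact ⟨.inl (x / 3), by simp; omega⟩
      · exact ⟨.inr ⟨x, hx⟩, rfl⟩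
  have h1 : X * d⁄dX (ZMod 3)
      (countSeries (ZMod 3) fun x : {x : ℤ // ¬ x % 3 = 1} => intTri x.1) = 0 := by
    rw [X_mul_derivative_countSeries (k := 0) (p := 3), Nat.cast_zero, zero_mul]
    rintro ⟨x, hx⟩
    have h2 := two_mul_intTri x
    have h3 : (3 : ℤ) ∣ x * (x + 1) := by
      rcases (by omega : 3 ∣ x ∨ 3 ∣ x + 1) with h | h
      · exact h.mul_right _
      · exact h.mul_left _
    rw [Nat.modEq_zero_iff_dvd]
    dsimp only
    omega
  conv_lhs => rw [h]
  rw [map_add, mul_add, h1, h9, X_mul_derivative_countSeries (k := 1) (p := 3)]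
  · simp
  · intro x
    simp only [Nat.ModEq]
    omega

/-- A series `p` with `p φ = Ψ` modulo 3, where `Ψ = 2 ψ`, has vanishing coefficients in degrees
congruent to 7 modulo 9. -/
theorem coeff_eq_zero_of_mul_thetaPhi_eq_countSeries_intTri {p : (ZMod 3)⟦X⟧}
    (hp : p * thetaPhi (ZMod 3) = countSeries (ZMod 3) intTri) (m : ℕ) :
    coeff (9 * m + 7) p = 0 := by
  have h3 := three_eq_zero_powerSeries
  have hF3 : X * d⁄dX (ZMod 3) (thetaPhi (ZMod 3) ^ 3) = 0 := X_mul_derivative_pow_three _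
  have hF := X_mul_derivative_thetaPhi
  have hP := X_mul_derivative_countSeries_intTri
  have hK := X_mul_countSeries_intTri_pow
  have hFne : thetaPhi (ZMod 3) ≠ 0 := by
    rw [thetaPhi_eq]
    intro h
    have := congrArg (coeff 0) h
    rw [map_add, ← map_ofNat (C (R := ZMod 3)) 2, coeff_C_mul, posSquareSeries,
      coeff_countSeries_eq_zero (fun i => by positivity)] at this
    simp at this
  have hcoef : ∀ f : (ZMod 3)⟦X⟧, ∀ n, coeff n (X * d⁄dX (ZMod 3) f) = n * coeff n f := by
    intro f n
    cases n with
    | zero => simp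
    | succ n => rw [coeff_succ_X_mul, coeff_derivative, mul_comm]; push_cast; rfl
  let D : (ZMod 3)⟦X⟧ → (ZMod 3)⟦X⟧ := fun f => X * d⁄dX (ZMod 3) f
  have hDmul : ∀ f g, D (f * g) = D f * g + f * D g := fun f g => by
    simp only [D, Derivation.leibniz, smul_eq_mul]
    ring
  have hDadd : ∀ f g, D (f + g) = D f + D g := fun f g => by
    simp only [D, map_add]
    ring
  change D _ = _ at hF3 hF hP
  have hmain : (D (D p) + D p) =
      X * countSeries (ZMod 3) intTri ^ 9 * thetaPhi (ZMod 3) ^ 3 := by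
    generalize countSeries (ZMod 3) intTri = P at *
    generalize thetaPhi (ZMod 3) = F at *
    have e0 : p * F ^ 3 = P * F * F := by rw [← hp]; ring
    have e1 : D p * F ^ 3 = P * F * F * (F ^ 4 + 2) := by
      have := congrArg D e0
      simp only [hDmul, hF3, hF, hP] at this
      linear_combination this + (P * F ^ 2) * hK + (P * F ^ 2) * (-F ^ 8) * h3
    have hD2 : D 2 = 0 := by
      rw [← map_ofNat (C (R := ZMod 3)) 2]
      simp only [D, derivative_C, mul_zero]
    have e2 : (D (D p) + D p) * F ^ 3 = X * P ^ 9 * F ^ 3 * F ^ 3 := by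
      have h := congrArg D (e1.trans (by ring : _ = P * F * F * (F * F * F * F + 2)))
      simp only [hDmul, hDadd, hF3, hF, hP, hD2] at h
      linear_combination h + e1 +
        (P * F ^ 2 * (F ^ 4 + 2) - P * F ^ 6) * hK +
        (P * F ^ 2) * (2 + 3 * F ^ 4 - 2 * F ^ 8 - 2 * F ^ 12) * h3
    exact mul_right_cancel₀ (pow_ne_zero 3 hFne) e2
  have hT : FiniteFibers fun x => 3 * (3 * intTri x) + 1 :=
    (finiteFibers_intTri.mul_add three_ne_zero 0).mul_add three_ne_zero 1
  have hS : FiniteFibers fun x : ℤ => 3 * x.natAbs ^ 2 := finiteFibers_sq.mul_add three_ne_zero 0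
  have hc := congrArg (coeff (9 * m + 7)) hmain
  rw [map_add, hcoef, hcoef, show 9 = 3 * 3 from rfl, pow_mul, countSeries_pow_three,
    countSeries_pow_three, thetaPhi, countSeries_pow_three, ← pow_one X, X_pow_mul_countSeries,
    countSeries_mul hT hS, coeff_countSeries_eq_zero] at hc
  · have h1 : (((3 * 3 * m + 7 : ℕ)) : ZMod 3) = 1 := by
      rw [show (1 : ZMod 3) = ((1 : ℕ) : ZMod 3) by simp, ZMod.natCast_eq_natCast_iff]
      simp only [Nat.ModEq]
      omega
    rw [h1] at hc
    change coeff (3 * 3 * m + 7) p = 0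
    revert hc
    generalize coeff (3 * 3 * m + 7) p = c
    revert c
    decide
  · rintro ⟨x, y⟩
    have : y.natAbs % 3 = 0 ∨ y.natAbs % 3 = 1 ∨ y.natAbs % 3 = 2 := by omega
    have : y.natAbs ^ 2 % 3 = 0 ∨ y.natAbs ^ 2 % 3 = 1 := by
      rcases this with h | h | h <;> simp [Nat.pow_mod, h]
    dsimp only
    omega

end modThree

section products
open Finset

/-- A finite form of Gauss' product formula for `φ(-q)`, due to Shanks. -/
theorem shanks_thetaPhi {A : Type*} [CommRing A] (q : A) (n : ℕ) :
    (1 + 2 * ∑ j ∈ range n, (-1) ^ (j + 1) * q ^ (j + 1) ^ 2) * ∏ i ∈ range n, (1 + q ^ (i + 1)) =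
      ∏ i ∈ range n, (1 - q ^ (i + 1)) + 2 * ∑ s ∈ range n, (-1) ^ (s + 1) *
        q ^ ((s + 1) * (n + 1)) * (∏ i ∈ range s, (1 + q ^ (i + 1))) *
        ∏ i ∈ Ico (s + 1) n, (1 - q ^ (i + 1)) := by
  induction n with
  | zero => simp
  | succ n ih =>
    let g : ℕ → A := fun s => (-1) ^ (s + 1) * q ^ ((s + 1) * (n + 1)) *
      (∏ i ∈ range s, (1 + q ^ (i + 1))) * ∏ i ∈ Ico s n, (1 - q ^ (i + 1))
    have hg := sum_range_sub g n
    have hg0 : g 0 = -q ^ (n + 1) * ∏ i ∈ range n, (1 - q ^ (i + 1)) := by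
      simp only [g, ← range_eq_Ico]
      simp
    have hgn : g n = (-1) ^ (n + 1) * q ^ ((n + 1) * (n + 1)) *
        ∏ i ∈ range n, (1 + q ^ (i + 1)) := by simp [g]
    have hstep : ∑ s ∈ range n, (-1) ^ (s + 1) *
        q ^ ((s + 1) * (n + 1 + 1)) * (∏ i ∈ range s, (1 + q ^ (i + 1))) *
        ∏ i ∈ Ico (s + 1) (n + 1), (1 - q ^ (i + 1)) =
        (1 + q ^ (n + 1)) * (∑ s ∈ range n, (-1) ^ (s + 1) *
        q ^ ((s + 1) * (n + 1)) * (∏ i ∈ range s, (1 + q ^ (i + 1))) *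
        ∏ i ∈ Ico (s + 1) n, (1 - q ^ (i + 1))) + (g n - g 0) := by
      rw [← hg, mul_sum, ← sum_add_distrib]
      refine sum_congr rfl fun s hs => ?_
      have hs' : s < n := mem_range.1 hs
      simp only [g]
      rw [prod_Ico_succ_top (by omega : s + 1 ≤ n), prod_range_succ,
        prod_eq_prod_Ico_succ_bot hs']
      ring
    rw [sum_range_succ _ n, sum_range_succ _ n, hstep, prod_range_succ, prod_range_succ, hg0, hgn,
      Ico_self, prod_empty]
    linear_combination (1 + q ^ (n + 1)) * ih

/-- A finite form of Gauss' product formula for `ψ(q)`, due to Shanks. -/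
theorem shanks_thetaPsi {A : Type*} [CommRing A] (q : A) (n : ℕ) :
    (∏ i ∈ range n, (1 - q ^ (2 * i + 1))) * ∑ j ∈ range (2 * n), q ^ (j * (j + 1) / 2) =
      ∑ s ∈ range n, q ^ (s * (2 * n + 1)) * (∏ i ∈ range s, (1 - q ^ (2 * i + 1))) *
        ∏ i ∈ Ico s n, (1 - q ^ (2 * i + 2)) := by
  induction n with
  | zero => simp
  | succ n ih =>
    let g : ℕ → A := fun s => q ^ (s * (2 * n + 1)) * (1 - q ^ (2 * s)) *
      (∏ i ∈ range s, (1 - q ^ (2 * i + 1))) * ∏ i ∈ Ico s n, (1 - q ^ (2 * i + 2))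
    have hg := sum_range_sub g n
    have hg0 : g 0 = 0 := by simp [g]
    have hgn : g n = q ^ (n * (2 * n + 1)) * (1 - q ^ (2 * n)) *
        ∏ i ∈ range n, (1 - q ^ (2 * i + 1)) := by simp [g]
    have hstep : ∑ s ∈ range n, q ^ (s * (2 * (n + 1) + 1)) *
        (∏ i ∈ range s, (1 - q ^ (2 * i + 1))) * ∏ i ∈ Ico s (n + 1), (1 - q ^ (2 * i + 2)) =
        (1 - q ^ (2 * n + 1)) * (∑ s ∈ range n, q ^ (s * (2 * n + 1)) *
        (∏ i ∈ range s, (1 - q ^ (2 * i + 1))) * ∏ i ∈ Ico s n, (1 - q ^ (2 * i + 2))) +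
        (g n - g 0) := by
      rw [← hg, mul_sum, ← sum_add_distrib]
      refine sum_congr rfl fun s hs => ?_
      have hs' : s < n := mem_range.1 hs
      simp only [g]
      rw [prod_Ico_succ_top (by omega : s ≤ n), prod_range_succ,
        prod_eq_prod_Ico_succ_bot hs']
      ring
    rw [sum_range_succ _ n, hstep, prod_range_succ, hg0, hgn, mul_add 2 n 1, mul_one,
      sum_range_succ, sum_range_succ, prod_Ico_succ_top le_rfl, Ico_self, prod_empty,
      show 2 * n * (2 * n + 1) / 2 = n * (2 * n + 1) by
        rw [mul_assoc, Nat.mul_div_cancel_left _ two_pos],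
      show (2 * n + 1) * (2 * n + 1 + 1) / 2 = (2 * n + 1) * (n + 1) by
        rw [show (2 * n + 1) * (2 * n + 1 + 1) = 2 * ((2 * n + 1) * (n + 1)) by ring,
          Nat.mul_div_cancel_left _ two_pos]]
    linear_combination (1 - q ^ (2 * n + 1)) * ih

theorem prod_range_two_mul {A : Type*} [CommRing A] (f : ℕ → A) (n : ℕ) :
    ∏ i ∈ range (2 * n), f i = (∏ i ∈ range n, f (2 * i)) * ∏ i ∈ range n, f (2 * i + 1) := by
  induction n with
  | zero => simp
  | succ n ih =>
    rw [mul_add 2 n 1, mul_one, prod_range_succ, prod_range_succ, prod_range_succ,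
      prod_range_succ, ih]
    ring

end products

section pedSeries
open Finset
open scoped PowerSeries.WithPiTopology

/-- The generating function of `ped`. -/
noncomputable def pedSeries : ℤ⟦X⟧ := PowerSeries.mk fun n => (ped n : ℤ)

/-- The indicator function of the allowed multiplicities `c` of a part `i` in a partition with
distinct even parts. -/
def pedMultiplicity (i c : ℕ) : ℤ := if Even i → c ≤ 1 then 1 else 0

theorem pedSeries_eq_genFun : pedSeries = Nat.Partition.genFun pedMultiplicity := by
  ext n
  rw [pedSeries, coeff_mk, Nat.Partition.coeff_genFun, ped, Fintype.card_subtype, card_filter]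
  push_cast
  refine sum_congr rfl fun p _ => ?_
  have h : p.parts.toFinsupp.prod pedMultiplicity =
      ∏ i ∈ p.parts.toFinset, pedMultiplicity i (p.parts.count i) := by
    rw [Finsupp.prod, Multiset.toFinsupp_support]
    exact prod_congr rfl fun i _ => by rw [Multiset.toFinsupp_apply]
  rw [h]
  simp only [pedMultiplicity]
  rw [prod_ite_zero]
  simp

theorem genFun_factor_odd {i : ℕ} (hi : Even i) :
    (1 + ∑' j, pedMultiplicity (i + 1) (j + 1) • (X : ℤ⟦X⟧) ^ ((i + 1) * (j + 1))) *
      (1 - X ^ (i + 1)) = 1 := by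
  have h : ∀ j, pedMultiplicity (i + 1) (j + 1) = 1 := fun j => by
    simp [pedMultiplicity, Nat.even_add_one, hi]
  have h0 := PowerSeries.WithPiTopology.tsum_pow_mul_one_sub_of_constantCoeff_eq_zero
    (f := (X : ℤ⟦X⟧) ^ (i + 1)) (by simp)
  have hs := PowerSeries.WithPiTopology.summable_pow_of_constantCoeff_eq_zero
    (f := (X : ℤ⟦X⟧) ^ (i + 1)) (by simp)
  rw [hs.tsum_eq_zero_add, pow_zero] at h0
  simpa only [h, one_smul, pow_mul] using h0

theorem genFun_factor_even {i : ℕ} (hi : ¬ Even i) :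
    1 + ∑' j, pedMultiplicity (i + 1) (j + 1) • (X : ℤ⟦X⟧) ^ ((i + 1) * (j + 1)) =
      1 + X ^ (i + 1) := by
  rw [tsum_eq_single 0]
  · simp [pedMultiplicity]
  · intro j hj
    simp [pedMultiplicity, Nat.even_add_one, hi, hj]

theorem exists_X_pow_dvd_pedSeries_mul_sub (M : ℕ) :
    ∃ N, M ≤ N ∧ X ^ M ∣ pedSeries * ∏ i ∈ range N, (1 - X ^ (2 * i + 1)) -
      ∏ i ∈ range N, (1 + X ^ (2 * i + 2)) := by
  let F : ℕ → ℤ⟦X⟧ := fun i =>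
    1 + ∑' j, pedMultiplicity (i + 1) (j + 1) • (X : ℤ⟦X⟧) ^ ((i + 1) * (j + 1))
  have hlim := (Nat.Partition.hasProd_genFun pedMultiplicity).tendsto_prod_nat
  rw [← pedSeries_eq_genFun, PowerSeries.WithPiTopology.tendsto_iff_coeff_tendsto] at hlim
  have hev : ∀ᶠ n in Filter.atTop, ∀ d ∈ range M,
      coeff d (∏ i ∈ range n, F i) = coeff d pedSeries :=
    (Filter.eventually_all_finset _).2 fun d _ => by
      have := hlim d
      rwa [nhds_discrete, Filter.tendsto_pure] at this
  obtain ⟨n₀, hn₀⟩ := Filter.eventually_atTop.1 hev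
  refine ⟨max M n₀, le_max_left _ _, ?_⟩
  generalize hN : max M n₀ = N
  have hF : (∏ i ∈ range (2 * N), F i) * ∏ i ∈ range N, (1 - X ^ (2 * i + 1)) =
      ∏ i ∈ range N, (1 + X ^ (2 * i + 2)) := by
    rw [prod_range_two_mul, mul_right_comm, ← prod_mul_distrib,
      prod_congr rfl fun i _ => genFun_factor_odd (even_two_mul i), prod_const_one, one_mul]
    exact prod_congr rfl fun i _ => genFun_factor_even (by simp)
  rw [← hF, ← sub_mul]
  refine Dvd.dvd.mul_right (X_pow_dvd_iff.2 fun d hd => ?_) _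
  rw [map_sub, hn₀ (2 * N) (by omega) d (mem_range.2 hd), sub_self]

end pedSeries

section identity
open Finset

theorem X_pow_dvd_countSeries_sub_sum {R : Type*} [CommRing R] {w : ℕ → ℕ} (hw : ∀ k, k ≤ w k)
    (n : ℕ) : X ^ n ∣ countSeries R w - ∑ j ∈ range n, X ^ w j := by
  refine X_pow_dvd_iff.2 fun d hd => ?_
  have h : Nat.card {i // w i = d} = #{j ∈ range n | d = w j} := by
    rw [Nat.card_congr (β := ({j ∈ range n | d = w j} : Finset ℕ))
      (Equiv.subtypeEquivRight fun j => ?_), Nat.card_eq_fintype_card, Fintype.card_coe]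
    have := hw j
    simp only [mem_filter, mem_range]
    omega
  rw [map_sub, map_sum, coeff_countSeries, h, card_filter]
  simp only [coeff_X_pow]
  push_cast
  exact sub_self _

theorem rescale_neg_one_X : rescale (-1 : ℤ) X = -X := by
  rw [rescale_X]
  simp

theorem X_pow_dvd_rescale_countSeries_sub_sum {w : ℕ → ℕ} (hw : ∀ k, k ≤ w k) (n : ℕ) :
    X ^ n ∣ rescale (-1 : ℤ) (countSeries ℤ w) - ∑ j ∈ range n, (-X) ^ w j := by
  have h := map_dvd (rescale (-1 : ℤ)) (X_pow_dvd_countSeries_sub_sum (R := ℤ) hw n)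
  rw [map_sub, map_sum, map_pow, rescale_neg_one_X] at h
  simp only [map_pow, rescale_neg_one_X] at h
  exact (Dvd.intro_left ((-1) ^ n) (neg_pow X n).symm).trans h

theorem X_pow_dvd_rescale_thetaPhi_mul_sub (n : ℕ) :
    X ^ n ∣ rescale (-1 : ℤ) (thetaPhi ℤ) * ∏ i ∈ range n, (1 + X ^ (i + 1)) -
      ∏ i ∈ range n, (1 - X ^ (i + 1)) := by
  have h := X_pow_dvd_rescale_countSeries_sub_sum (w := fun k => (k + 1) ^ 2)
    (fun k => by nlinarith) n
  have hsign : ∀ j : ℕ, (-X : ℤ⟦X⟧) ^ (j + 1) ^ 2 = (-1) ^ (j + 1) * X ^ (j + 1) ^ 2 := fun j => by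
    rw [neg_pow, sq (j + 1), pow_mul (-1)]
    rcases neg_one_pow_eq_or ℤ⟦X⟧ (j + 1) with h | h
    · rw [h, one_pow]
    · rw [h]
      exact congrArg (· * _) ((neg_one_pow_congr (by simp)).trans h)
  simp only [hsign] at h
  have hs := shanks_thetaPhi (X : ℤ⟦X⟧) n
  have ht : X ^ n ∣ ∑ s ∈ range n, (-1) ^ (s + 1) *
        X ^ ((s + 1) * (n + 1)) * (∏ i ∈ range s, (1 + X ^ (i + 1))) *
        ∏ i ∈ Ico (s + 1) n, (1 - X ^ (i + 1) : ℤ⟦X⟧) :=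
    dvd_sum fun s _ => (((pow_dvd_pow X (by nlinarith)).mul_left _).mul_right _).mul_right _
  rw [thetaPhi_eq, map_add, map_one, map_mul, map_ofNat, posSquareSeries]
  have := (((h.mul_left 2).mul_right (∏ i ∈ range n, (1 + X ^ (i + 1) : ℤ⟦X⟧))).add
    (ht.mul_left 2))
  convert this using 1
  linear_combination hs

theorem X_pow_dvd_rescale_thetaPsi_mul_sub (n : ℕ) :
    X ^ (2 * n) ∣ rescale (-1 : ℤ) (thetaPsi ℤ) * ∏ i ∈ range n, (1 + X ^ (2 * i + 1)) -
      ∏ i ∈ range n, (1 - X ^ (2 * i + 2)) := by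
  have h := X_pow_dvd_rescale_countSeries_sub_sum (w := fun k => k * (k + 1) / 2)
    le_tri (2 * n)
  have hs := shanks_thetaPsi (-X : ℤ⟦X⟧) n
  rcases n with _ | n
  · simp
  have hodd : ∀ i : ℕ, (-X : ℤ⟦X⟧) ^ (2 * i + 1) = -X ^ (2 * i + 1) := fun i =>
    (odd_two_mul_add_one i).neg_pow X
  have heven : ∀ i : ℕ, (-X : ℤ⟦X⟧) ^ (2 * i + 2) = X ^ (2 * i + 2) := fun i =>
    Even.neg_pow ⟨i + 1, by ring⟩ X
  have ht : X ^ (2 * (n + 1)) ∣ ∑ s ∈ range n, (-X) ^ ((s + 1) * (2 * (n + 1) + 1)) *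
      (∏ i ∈ range (s + 1), (1 - (-X) ^ (2 * i + 1))) *
      ∏ i ∈ Ico (s + 1) (n + 1), (1 - (-X : ℤ⟦X⟧) ^ (2 * i + 2)) :=
    dvd_sum fun s _ => by
      rw [neg_pow X ((s + 1) * _)]
      exact (((pow_dvd_pow X (by nlinarith)).mul_left _).mul_right _).mul_right _
  rw [sum_range_succ'] at hs
  simp only [hodd, heven, sub_neg_eq_add, zero_mul, pow_zero, one_mul, range_zero, prod_empty,
    ← range_eq_Ico] at hs ht
  rw [thetaPsi]
  have := (h.mul_right (∏ i ∈ range (n + 1), (1 + X ^ (2 * i + 1) : ℤ⟦X⟧))).add ht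
  convert this using 1
  linear_combination hs

theorem pedSeries_mul_rescale_thetaPhi :
    pedSeries * rescale (-1 : ℤ) (thetaPhi ℤ) = rescale (-1 : ℤ) (thetaPsi ℤ) := by
  rw [← sub_eq_zero]
  ext M
  obtain ⟨N, hN, h3⟩ := exists_X_pow_dvd_pedSeries_mul_sub (M + 1)
  have h1 := (pow_dvd_pow X (by omega : M + 1 ≤ 2 * N)).trans
    (X_pow_dvd_rescale_thetaPhi_mul_sub (2 * N))
  have h2 := (pow_dvd_pow X (by omega : M + 1 ≤ 2 * N)).trans
    (X_pow_dvd_rescale_thetaPsi_mul_sub N)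
  rw [prod_range_two_mul, prod_range_two_mul] at h1
  simp only [add_assoc, Nat.reduceAdd] at h1
  have hu : IsUnit ((∏ i ∈ range N, (1 + X ^ (2 * i + 1))) * (∏ i ∈ range N, (1 + X ^ (2 * i + 2))) *
      ∏ i ∈ range N, (1 - X ^ (2 * i + 1)) : ℤ⟦X⟧) := by
    rw [PowerSeries.isUnit_iff_constantCoeff]
    simp
  refine X_pow_dvd_iff.1 ((hu.dvd_mul_right (a := X ^ (M + 1))).1 ?_) M (Nat.lt_succ_self M)
  have := ((h3.mul_left (rescale (-1 : ℤ) (thetaPhi ℤ) * (∏ i ∈ range N, (1 + X ^ (2 * i + 1))) *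
    ∏ i ∈ range N, (1 + X ^ (2 * i + 2)))).add
    (h1.mul_left (∏ i ∈ range N, (1 + X ^ (2 * i + 2))))).sub
    (h2.mul_left ((∏ i ∈ range N, (1 + X ^ (2 * i + 2))) * ∏ i ∈ range N, (1 - X ^ (2 * i + 1))))
  convert this using 1
  ring

/-- The generating function of `(-1) ^ n * ped n` is `ψ(q) / φ(q)`. -/
theorem rescale_pedSeries_mul_thetaPhi :
    rescale (-1 : ℤ) pedSeries * thetaPhi ℤ = thetaPsi ℤ := by
  have h := congrArg (rescale (-1 : ℤ)) pedSeries_mul_rescale_thetaPhi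
  simpa only [map_mul, rescale_rescale, mul_neg, mul_one, neg_neg, rescale_one, RingHom.id_apply]
    using h

end identity

section modEight

theorem sq_add_sixteen_mul_sq_ne (x y k : ℕ) : y ^ 2 + 16 * x ^ 2 ≠ 1800 * k + 1065 := by
  intro h
  have h3 : 3 ∣ x ∧ 3 ∣ y := by
    have h0 : (y ^ 2 + 16 * x ^ 2) % 3 = 0 := by omega
    have hx : x % 3 = 0 ∨ x % 3 = 1 ∨ x % 3 = 2 := by omega
    have hy : y % 3 = 0 ∨ y % 3 = 1 ∨ y % 3 = 2 := by omega
    rcases hx with hx | hx | hx <;> rcases hy with hy | hy | hy <;>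
      simp [Nat.pow_mod, Nat.add_mod, Nat.mul_mod, hx, hy] at h0 <;> omega
  obtain ⟨⟨a, rfl⟩, ⟨b, rfl⟩⟩ := h3
  have : 9 * (b ^ 2 + 16 * a ^ 2) = 1800 * k + 1065 := by rw [← h]; ring
  omega

theorem sq_add_eight_mul_sq_ne (x y k : ℕ) : y ^ 2 + 8 * x ^ 2 ≠ 1800 * k + 1065 := by
  intro h
  have h5 : 5 ∣ x ∧ 5 ∣ y := by
    have h0 : (y ^ 2 + 8 * x ^ 2) % 5 = 0 := by omega
    have hx : x % 5 = 0 ∨ x % 5 = 1 ∨ x % 5 = 2 ∨ x % 5 = 3 ∨ x % 5 = 4 := by omega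
    have hy : y % 5 = 0 ∨ y % 5 = 1 ∨ y % 5 = 2 ∨ y % 5 = 3 ∨ y % 5 = 4 := by omega
    rcases hx with hx | hx | hx | hx | hx <;> rcases hy with hy | hy | hy | hy | hy <;>
      simp [Nat.pow_mod, Nat.add_mod, Nat.mul_mod, hx, hy] at h0 <;> omega
  obtain ⟨⟨a, rfl⟩, ⟨b, rfl⟩⟩ := h5
  have : 25 * (b ^ 2 + 8 * a ^ 2) = 1800 * k + 1065 := by rw [← h]; ring
  omega

theorem even_card_tri_add_succ_sq_add_succ_sq (k : ℕ) :
    Even (Nat.card {p : ℕ × ℕ × ℕ // p.1 * (p.1 + 1) / 2 + ((p.2.1 + 1) ^ 2 + (p.2.2 + 1) ^ 2) =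
      225 * k + 133}) := by
  have hfin := (finiteFibers_tri.prod (finiteFibers_succ_sq.prod finiteFibers_succ_sq))
    (225 * k + 133)
  have := Fintype.ofFinite {p : ℕ × ℕ × ℕ //
    p.1 * (p.1 + 1) / 2 + ((p.2.1 + 1) ^ 2 + (p.2.2 + 1) ^ 2) = 225 * k + 133}
  let f : Function.End {p : ℕ × ℕ × ℕ //
      p.1 * (p.1 + 1) / 2 + ((p.2.1 + 1) ^ 2 + (p.2.2 + 1) ^ 2) = 225 * k + 133} :=
    fun p => ⟨(p.1.1, p.1.2.2, p.1.2.1), by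
      refine Eq.trans ?_ p.2
      dsimp only
      rw [add_comm ((p.1.2.2 + 1) ^ 2)]⟩
  have hf : f ^ 2 ^ 1 = 1 := rfl
  classical
  have key := Equiv.Perm.card_fixedPoints_modEq (p := 2) hf
  have h0 : IsEmpty f.fixedPoints := by
    refine ⟨?_⟩
    rintro ⟨⟨⟨y, x, z⟩, h⟩, hp⟩
    have hp' : (y, z, x) = (y, x, z) := congrArg Subtype.val hp
    simp only [Prod.mk.injEq, true_and] at hp'
    obtain ⟨rfl, -⟩ := hp'
    dsimp only at h
    have := two_mul_nat_tri y
    exact sq_add_sixteen_mul_sq_ne (z + 1) (2 * y + 1) k (by linarith)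
  rw [Fintype.card_eq_zero (α := f.fixedPoints), ← Nat.card_eq_fintype_card] at key
  exact Nat.even_iff.2 key

/-- A series `p` with `p φ = ψ` modulo 8 has vanishing coefficients in degrees congruent to 133
modulo 225. -/
theorem coeff_eq_zero_of_mul_thetaPhi_eq_thetaPsi {p : (ZMod 8)⟦X⟧}
    (hp : p * thetaPhi (ZMod 8) = thetaPsi (ZMod 8)) (k : ℕ) :
    coeff (225 * k + 133) p = 0 := by
  have h8 : (8 : (ZMod 8)⟦X⟧) = 0 := by
    rw [← map_ofNat (C (R := ZMod 8)) 8, show (OfNat.ofNat 8 : ZMod 8) = 0 by decide, map_zero]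
  rw [thetaPhi_eq] at hp
  have hp' : p = thetaPsi (ZMod 8) -
      2 • (thetaPsi (ZMod 8) * posSquareSeries (ZMod 8)) +
      4 • (thetaPsi (ZMod 8) * (posSquareSeries (ZMod 8) * posSquareSeries (ZMod 8))) := by
    simp only [nsmul_eq_mul, Nat.cast_ofNat]
    generalize posSquareSeries (ZMod 8) = S at *
    rw [← hp]
    linear_combination (-p * S ^ 3) * h8
  rw [hp', map_add, map_sub, map_nsmul, map_nsmul, thetaPsi, posSquareSeries,
    countSeries_mul finiteFibers_succ_sq finiteFibers_succ_sq,
    countSeries_mul finiteFibers_tri finiteFibers_succ_sq,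
    countSeries_mul finiteFibers_tri (finiteFibers_succ_sq.prod finiteFibers_succ_sq),
    coeff_countSeries_eq_zero, coeff_countSeries_eq_zero, coeff_countSeries]
  · obtain ⟨c, hc⟩ := even_card_tri_add_succ_sq_add_succ_sq k
    rw [hc]
    push_cast
    generalize (c : ZMod 8) = c
    revert c
    decide
  · rintro ⟨y, x⟩ h
    have := two_mul_nat_tri y
    exact sq_add_eight_mul_sq_ne (x + 1) (2 * y + 1) k (by dsimp only at h; linarith)
  · intro y h
    have := two_mul_nat_tri y
    exact sq_add_sixteen_mul_sq_ne 0 (2 * y + 1) k (by linarith)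

end modEight

theorem map_rescale_pedSeries_mul_thetaPhi (R : Type*) [CommRing R] :
    PowerSeries.map (Int.castRingHom R) (rescale (-1 : ℤ) pedSeries) * thetaPhi R =
      thetaPsi R := by
  have h := congrArg (PowerSeries.map (Int.castRingHom R)) rescale_pedSeries_mul_thetaPhi
  rwa [map_mul, thetaPhi, thetaPsi, map_countSeries, map_countSeries] at h

theorem dvd_ped_of_coeff_eq_zero {m n : ℕ}
    (h : coeff n (PowerSeries.map (Int.castRingHom (ZMod m)) (rescale (-1 : ℤ) pedSeries)) = 0) :
    m ∣ ped n := by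
  rw [coeff_map, coeff_rescale, pedSeries, coeff_mk, eq_intCast] at h
  push_cast at h
  rw [← ZMod.natCast_eq_zero_iff]
  rcases neg_one_pow_eq_or (ZMod m) n with h' | h' <;> simpa [h'] using h

theorem ped_225n_add_133 (n : ℕ) : ped (225 * n + 133) ≡ 0 [MOD 24] := by
  have h8 : 8 ∣ ped (225 * n + 133) := dvd_ped_of_coeff_eq_zero
    (coeff_eq_zero_of_mul_thetaPhi_eq_thetaPsi (map_rescale_pedSeries_mul_thetaPhi (ZMod 8)) n)
  have h3 : 3 ∣ ped (225 * n + 133) := by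
    refine dvd_ped_of_coeff_eq_zero ?_
    have h := map_rescale_pedSeries_mul_thetaPhi (ZMod 3)
    generalize PowerSeries.map (Int.castRingHom (ZMod 3)) (rescale (-1 : ℤ) pedSeries) = p at *
    have hc := coeff_eq_zero_of_mul_thetaPhi_eq_countSeries_intTri (p := 2 • p)
      (by rw [smul_mul_assoc, h, countSeries_intTri, nsmul_eq_mul, Nat.cast_ofNat]) (25 * n + 14)
    rw [map_nsmul, show 9 * (25 * n + 14) + 7 = 225 * n + 133 by ring] at hc
    revert hc
    generalize coeff (225 * n + 133) p = c
    revert c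
    decide
  exact (Nat.modEq_zero_iff_dvd).2 (Nat.Coprime.mul_dvd_of_dvd_of_dvd (by norm_num) h8 h3)
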